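/- Let α* = arcsin(d/2), Ξ = [0,π] × [α*, π−α*], and C(d,σ,δ) = min(L(d,σ,δ), R(d,σ,δ)) with L(d,σ,δ) = 2π − 4·arcsin(d_L(d,σ,δ)/4) + 2δ and R(d,σ,δ) = 4π − 4·arcsin(d_R(d,σ,δ)/4) − 2δ. If 0 < d ≤ √2, then there exists δ₀ ∈ [α*, π−α*] such that C(d, π, δ₀) = sup{ C(d,σ,δ) : (σ,δ) ∈ Ξ }. If √2 ≤ d < 2, then there exists σ₀ ∈ [0, π] such that C(d, σ₀, π−α*) = sup{ C(d,σ,δ) : (σ,δ) ∈ Ξ }. -/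

import Mathlib

open Real

/-- Distance between the centers of the two left disks, in `(σ, δ)` coordinates. -/
noncomputable def dL (d σ δ : ℝ) : ℝ :=
  Real.sqrt (d ^ 2 - 4 * d * Real.sin δ * Real.cos σ + 4 * Real.sin δ ^ 2)

/-- Distance between the centers of the two right disks, in `(σ, δ)` coordinates. -/
noncomputable def dR (d σ δ : ℝ) : ℝ :=
  Real.sqrt (d ^ 2 + 4 * d * Real.sin δ * Real.cos σ + 4 * Real.sin δ ^ 2)

/-- Length of the LRL-type bounded-curvature path. -/
noncomputable def Lfun (d σ δ : ℝ) : ℝ :=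
  2 * π - 4 * Real.arcsin (dL d σ δ / 4) + 2 * δ

/-- Length of the RLR-type bounded-curvature path. -/
noncomputable def Rfun (d σ δ : ℝ) : ℝ :=
  4 * π - 4 * Real.arcsin (dR d σ δ / 4) - 2 * δ

/-- Minimum of the LRL- and RLR-path lengths. -/
noncomputable def Cfun (d σ δ : ℝ) : ℝ :=
  min (Lfun d σ δ) (Rfun d σ δ)

/-- The supremum of `Cfun` over the rectangle `Ξ(d) = [0, π] × [α*, π - α*]`,
where `α* = arcsin (d/2)`. -/
noncomputable def Afun (d : ℝ) : ℝ :=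
  sSup ((fun p : ℝ × ℝ => Cfun d p.1 p.2) ''
    (Set.Icc 0 π ×ˢ Set.Icc (Real.arcsin (d / 2)) (π - Real.arcsin (d / 2))))

/-!
The reflection `(σ, δ) ↦ (π - σ, π - δ)` swaps the two lengths. With `σ` growing, the RLR length
grows, and along `σ = π` it decreases in `δ`; moving along these directions until the two lengths
agree shows that every point of `Ξ` is dominated by a balanced one, where `L = R`.

At a balanced point `δ = π / 2 - (B - A)` with `A = arcsin (d_L / 4)` and `B = arcsin (d_R / 4)`,
so `cos (A + B) cos (B - A) = 1 - sin² A - sin² B` determines `A + B`, hence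
`C = 3π - 2 (A + B)`, from `sin δ` alone, and `C` is decreasing in `sin δ`. The optimum is therefore
the balanced point with `δ` as close to `π - α*` as possible. The corner `(π, π - α*)` has
`R ≤ L` exactly when `d ≤ √2`, which decides whether the balanced curve leaves `Ξ` through
`σ = π` or through `δ = π - α*`.
-/

open Set

/-- The interval `[α*, π - α*]` of admissible `δ`, where `α* = arcsin (d / 2)`. -/
abbrev deltaRange (d : ℝ) : Set ℝ :=
  Icc (arcsin (d / 2)) (π - arcsin (d / 2))

/-- The points `(σ, δ)` at which the LRL- and RLR-type paths have equal length; the candidates for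
maximizers of `Cfun d`. -/
def IsBalanced (d σ δ : ℝ) : Prop :=
  Lfun d σ δ = Rfun d σ δ

/-- The sum `A + B` of the angles `A = arcsin (d_L / 4)` and `B = arcsin (d_R / 4)`, in terms of
which the average of the two lengths is `3π - 2 (A + B)`. -/
noncomputable def arcsinSum (d σ δ : ℝ) : ℝ :=
  arcsin (dL d σ δ / 4) + arcsin (dR d σ δ / 4)

variable {d σ δ σ' δ' : ℝ}

theorem sin_le_sin_of_mem_Icc_pi_sub {a x : ℝ} (ha : -(π / 2) ≤ a) (hx : x ∈ Icc a (π - a)) :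
    sin a ≤ sin x := by
  rw [← cos_pi_div_two_sub a, ← cos_pi_div_two_sub x, ← cos_abs (π / 2 - x)]
  exact cos_le_cos_of_nonneg_of_le_pi (abs_nonneg _) (by linarith)
    (abs_le.2 ⟨by linarith [hx.2], by linarith [hx.1]⟩)

theorem cos_add_mul_cos_sub_eq (x y : ℝ) :
    cos (x + y) * cos (x - y) = 1 - sin x ^ 2 - sin y ^ 2 := by
  rw [cos_add, cos_sub]
  linear_combination cos y ^ 2 * cos_sq_add_sin_sq x - sin x ^ 2 * cos_sq_add_sin_sq y +
    cos_sq_add_sin_sq y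

/-! ### The range of `δ` -/

theorem pi_sub_mem_deltaRange (hδ : δ ∈ deltaRange d) : π - δ ∈ deltaRange d :=
  ⟨by linarith [hδ.2], by linarith [hδ.1]⟩

theorem arcsin_mem_deltaRange (d : ℝ) : arcsin (d / 2) ∈ deltaRange d :=
  ⟨le_rfl, by linarith [arcsin_le_pi_div_two (d / 2)]⟩

theorem sin_arcsin_half (hd₀ : 0 ≤ d) (hd₂ : d ≤ 2) : sin (arcsin (d / 2)) = d / 2 :=
  sin_arcsin (by linarith) (by linarith)

theorem half_le_sin_of_mem_deltaRange (hd₀ : 0 ≤ d) (hd₂ : d ≤ 2) (hδ : δ ∈ deltaRange d) :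
    d / 2 ≤ sin δ := by
  rw [← sin_arcsin_half hd₀ hd₂]
  exact sin_le_sin_of_mem_Icc_pi_sub (neg_pi_div_two_le_arcsin _) hδ

theorem sin_nonneg_of_mem_deltaRange (hd₀ : 0 ≤ d) (hδ : δ ∈ deltaRange d) : 0 ≤ sin δ := by
  have hα : 0 ≤ arcsin (d / 2) := arcsin_nonneg.2 (by linarith)
  exact sin_nonneg_of_mem_Icc ⟨hα.trans hδ.1, hδ.2.trans (by linarith)⟩

theorem arcsin_half_le_pi_div_four_iff : arcsin (d / 2) ≤ π / 4 ↔ d ≤ √2 := by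
  rw [arcsin_le_iff_le_sin' ⟨by linarith [pi_pos], by linarith [pi_pos]⟩, sin_pi_div_four,
    div_le_div_iff_of_pos_right two_pos]

theorem pi_div_four_le_arcsin_half_iff : π / 4 ≤ arcsin (d / 2) ↔ √2 ≤ d := by
  rw [le_arcsin_iff_sin_le' ⟨by linarith [pi_pos], by linarith [pi_pos]⟩, sin_pi_div_four,
    div_le_div_iff_of_pos_right two_pos]

theorem sqrt_two_le_two : √2 ≤ 2 :=
  (sqrt_le_left zero_le_two).2 (by norm_num)

/-! ### Center distances -/

theorem dL_nonneg (d σ δ : ℝ) : 0 ≤ dL d σ δ :=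
  sqrt_nonneg _

theorem dL_sq (d σ δ : ℝ) :
    dL d σ δ ^ 2 = d ^ 2 - 4 * d * sin δ * cos σ + 4 * sin δ ^ 2 := by
  have law_of_cosines : d ^ 2 - 4 * d * sin δ * cos σ + 4 * sin δ ^ 2 =
      (d - 2 * sin δ * cos σ) ^ 2 + (2 * sin δ * sin σ) ^ 2 := by
    linear_combination -4 * sin δ ^ 2 * cos_sq_add_sin_sq σ
  exact sq_sqrt (law_of_cosines ▸ by positivity)

theorem dL_pi_sub (d σ δ : ℝ) : dL d (π - σ) δ = dR d σ δ := by
  rw [dL, dR, cos_pi_sub]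
  ring_nf

theorem dR_nonneg (d σ δ : ℝ) : 0 ≤ dR d σ δ :=
  sqrt_nonneg _

theorem dR_sq (d σ δ : ℝ) :
    dR d σ δ ^ 2 = d ^ 2 + 4 * d * sin δ * cos σ + 4 * sin δ ^ 2 := by
  rw [← dL_pi_sub, dL_sq, cos_pi_sub]
  ring

theorem dL_pi (d δ : ℝ) : dL d π δ = |2 * sin δ + d| := by
  rw [dL, cos_pi, ← sqrt_sq_eq_abs]
  ring_nf

theorem dR_pi (d δ : ℝ) : dR d π δ = |2 * sin δ - d| := by
  rw [dR, cos_pi, ← sqrt_sq_eq_abs]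
  ring_nf

theorem dL_le_four (hd : |d| ≤ 2) : dL d σ δ ≤ 4 := by
  have hcross : |d * sin δ * cos σ| ≤ 2 := by
    rw [abs_mul, abs_mul]
    calc |d| * |sin δ| * |cos σ| ≤ 2 * 1 * 1 := by
          gcongr
          exacts [abs_sin_le_one δ, abs_cos_le_one σ]
      _ = 2 := by norm_num
  have hsq : d ^ 2 ≤ 2 ^ 2 := sq_le_sq.2 (hd.trans (le_abs_self 2))
  refine abs_le_of_sq_le_sq' ?_ zero_le_four |>.2
  rw [dL_sq]
  linarith [neg_abs_le (d * sin δ * cos σ), sin_sq_le_one δ]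

theorem sin_arcsin_dL_div_four (hd : |d| ≤ 2) : sin (arcsin (dL d σ δ / 4)) = dL d σ δ / 4 :=
  sin_arcsin (by linarith [dL_nonneg d σ δ]) (by linarith [dL_le_four (σ := σ) (δ := δ) hd])

theorem sin_arcsin_dR_div_four (hd : |d| ≤ 2) : sin (arcsin (dR d σ δ / 4)) = dR d σ δ / 4 := by
  rw [← dL_pi_sub]
  exact sin_arcsin_dL_div_four hd

/-! ### The two path lengths -/

section Continuity

variable {X : Type*} [TopologicalSpace X] {e s t : X → ℝ}

@[fun_prop]
theorem continuous_Lfun (he : Continuous e) (hs : Continuous s) (ht : Continuous t) :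
    Continuous fun x => Lfun (e x) (s x) (t x) := by
  unfold Lfun dL
  fun_prop

@[fun_prop]
theorem continuous_Rfun (he : Continuous e) (hs : Continuous s) (ht : Continuous t) :
    Continuous fun x => Rfun (e x) (s x) (t x) := by
  unfold Rfun dR
  fun_prop

end Continuity

theorem Lfun_pi_sub_pi_sub (d σ δ : ℝ) : Lfun d (π - σ) (π - δ) = Rfun d σ δ := by
  simp only [Lfun, Rfun, dL, dR, sin_pi_sub, cos_pi_sub]
  ring_nf

theorem Rfun_pi_sub_pi_sub (d σ δ : ℝ) : Rfun d (π - σ) (π - δ) = Lfun d σ δ := by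
  rw [← Lfun_pi_sub_pi_sub, sub_sub_cancel, sub_sub_cancel]

theorem Cfun_pi_sub_pi_sub (d σ δ : ℝ) : Cfun d (π - σ) (π - δ) = Cfun d σ δ := by
  rw [Cfun, Cfun, Lfun_pi_sub_pi_sub, Rfun_pi_sub_pi_sub, min_comm]

theorem Lfun_add_Rfun (d σ δ : ℝ) : Lfun d σ δ + Rfun d σ δ = 6 * π - 4 * arcsinSum d σ δ := by
  rw [Lfun, Rfun, arcsinSum]
  ring

theorem monotoneOn_Rfun_left (hd : 0 ≤ d) (hδ : 0 ≤ sin δ) :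
    MonotoneOn (fun σ => Rfun d σ δ) (Icc 0 π) := by
  intro σ hσ σ' hσ' hle
  have hcos : cos σ' ≤ cos σ := cos_le_cos_of_nonneg_of_le_pi hσ.1 hσ'.2 hle
  have hdist : dR d σ' δ ≤ dR d σ δ := by
    unfold dR
    gcongr
  have harcsin : arcsin (dR d σ' δ / 4) ≤ arcsin (dR d σ δ / 4) :=
    monotone_arcsin (by linarith)
  simp only [Rfun]
  linarith

theorem Lfun_pi_le_Rfun_pi (hd : 0 ≤ d) (hsin : 0 ≤ sin δ) (hδ : δ ≤ π / 2) :
    Lfun d π δ ≤ Rfun d π δ := by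
  have hdist : dR d π δ ≤ dL d π δ := by
    rw [dL_pi, dR_pi, abs_of_nonneg (by positivity : 0 ≤ 2 * sin δ + d)]
    exact abs_le.2 ⟨by linarith, by linarith⟩
  have harcsin : arcsin (dR d π δ / 4) ≤ arcsin (dL d π δ / 4) :=
    monotone_arcsin (by linarith)
  rw [Lfun, Rfun]
  linarith

theorem hasDerivAt_two_mul_arcsin_add (h₁ : (2 * sin δ - d) / 4 ≠ -1)
    (h₂ : (2 * sin δ - d) / 4 ≠ 1) :
    HasDerivAt (fun x => 2 * arcsin ((2 * sin x - d) / 4) + x)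
      (cos δ / √(1 - ((2 * sin δ - d) / 4) ^ 2) + 1) δ := by
  have hinner : HasDerivAt (fun x => (2 * sin x - d) / 4) (2 * cos δ / 4) δ :=
    (((hasDerivAt_sin δ).const_mul 2).sub_const d).div_const 4
  have hsum := (((hasDerivAt_arcsin h₁ h₂).comp δ hinner).const_mul 2).add (hasDerivAt_id δ)
  exact hsum.congr_deriv (by ring)

theorem monotoneOn_two_mul_arcsin_add {D : Set ℝ} (hD : Convex ℝ D) (hd : 0 ≤ d)
    (hsin : ∀ x ∈ D, d / 2 ≤ sin x) :
    MonotoneOn (fun x => 2 * arcsin ((2 * sin x - d) / 4) + x) D := by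
  have hderiv : ∀ x ∈ D, HasDerivAt (fun x => 2 * arcsin ((2 * sin x - d) / 4) + x)
      (cos x / √(1 - ((2 * sin x - d) / 4) ^ 2) + 1) x := fun x hx =>
    hasDerivAt_two_mul_arcsin_add (by linarith [hsin x hx]) (by linarith [sin_le_one x])
  refine monotoneOn_of_hasDerivWithinAt_nonneg hD
    (fun x hx => (hderiv x hx).continuousAt.continuousWithinAt)
    (fun x hx => (hderiv x (interior_subset hx)).hasDerivWithinAt) fun x hx => ?_
  have hx := hsin x (interior_subset hx)
  have hsq : ((2 * sin x - d) / 4) ^ 2 ≤ sin x ^ 2 :=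
    pow_le_pow_left₀ (by linarith) (by linarith) 2
  have hcos : |cos x| ≤ √(1 - ((2 * sin x - d) / 4) ^ 2) :=
    abs_le_sqrt (by linarith [sin_sq_add_cos_sq x])
  have hquot : |cos x / √(1 - ((2 * sin x - d) / 4) ^ 2)| ≤ 1 := by
    rw [abs_div, abs_of_nonneg (sqrt_nonneg _)]
    exact div_le_one_of_le₀ hcos (sqrt_nonneg _)
  linarith [neg_le_of_abs_le hquot]

theorem antitoneOn_Rfun_pi (hd₀ : 0 ≤ d) (hd₂ : d ≤ 2) :
    AntitoneOn (Rfun d π) (deltaRange d) := by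
  have hsin : ∀ x ∈ deltaRange d, d / 2 ≤ sin x := fun _ =>
    half_le_sin_of_mem_deltaRange hd₀ hd₂
  intro x hx y hy hxy
  have hmono := monotoneOn_two_mul_arcsin_add (convex_Icc _ _) hd₀ hsin hx hy hxy
  simp only at hmono
  rw [Rfun, Rfun, dR_pi, dR_pi, abs_of_nonneg (by linarith [hsin y hy]),
    abs_of_nonneg (by linarith [hsin x hx])]
  linarith

theorem Lfun_pi_pi_sub_arcsin (hd₀ : 0 ≤ d) (hd₂ : d ≤ 2) :
    Lfun d π (π - arcsin (d / 2)) = 4 * π - 6 * arcsin (d / 2) := by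
  rw [Lfun, dL_pi, sin_pi_sub, sin_arcsin_half hd₀ hd₂, abs_of_nonneg (by linarith),
    show (2 * (d / 2) + d) / 4 = d / 2 by ring]
  ring

theorem Rfun_pi_pi_sub_arcsin (hd₀ : 0 ≤ d) (hd₂ : d ≤ 2) :
    Rfun d π (π - arcsin (d / 2)) = 2 * π + 2 * arcsin (d / 2) := by
  rw [Rfun, dR_pi, sin_pi_sub, sin_arcsin_half hd₀ hd₂, mul_div_cancel₀ d two_ne_zero, sub_self,
    abs_zero, zero_div, arcsin_zero]
  ring

/-! ### Balanced points -/

namespace IsBalanced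

theorem pi_sub_pi_sub (h : IsBalanced d σ δ) : IsBalanced d (π - σ) (π - δ) := by
  rw [IsBalanced, Lfun_pi_sub_pi_sub, Rfun_pi_sub_pi_sub]
  exact h.symm

theorem Cfun_eq_Rfun (h : IsBalanced d σ δ) : Cfun d σ δ = Rfun d σ δ :=
  min_eq_right h.ge

theorem Cfun_eq (h : IsBalanced d σ δ) : Cfun d σ δ = 3 * π - 2 * arcsinSum d σ δ := by
  have heq : Lfun d σ δ = Rfun d σ δ := h
  linarith [h.Cfun_eq_Rfun, Lfun_add_Rfun d σ δ]

theorem cos_arcsinSum_mul_sin (h : IsBalanced d σ δ) (hd : |d| ≤ 2) :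
    cos (arcsinSum d σ δ) * sin δ = 1 - d ^ 2 / 8 - sin δ ^ 2 / 2 := by
  have hdiff : arcsin (dL d σ δ / 4) - arcsin (dR d σ δ / 4) = δ - π / 2 := by
    rw [IsBalanced, Lfun, Rfun] at h
    linarith
  have hcos := cos_add_mul_cos_sub_eq (arcsin (dL d σ δ / 4)) (arcsin (dR d σ δ / 4))
  rw [hdiff, cos_sub_pi_div_two, sin_arcsin_dL_div_four hd, sin_arcsin_dR_div_four hd, div_pow,
    div_pow, dL_sq, dR_sq] at hcos
  rw [arcsinSum, hcos]
  ring

end IsBalanced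

theorem arcsinSum_mem_Icc (d σ δ : ℝ) : arcsinSum d σ δ ∈ Icc 0 π := by
  have hL : 0 ≤ arcsin (dL d σ δ / 4) := arcsin_nonneg.2 (by linarith [dL_nonneg d σ δ])
  have hR : 0 ≤ arcsin (dR d σ δ / 4) := arcsin_nonneg.2 (by linarith [dR_nonneg d σ δ])
  have hL' := arcsin_le_pi_div_two (dL d σ δ / 4)
  have hR' := arcsin_le_pi_div_two (dR d σ δ / 4)
  rw [arcsinSum]
  exact ⟨by linarith, by linarith⟩

theorem IsBalanced.Cfun_le_Cfun_of_sin_le (h : IsBalanced d σ δ) (h' : IsBalanced d σ' δ')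
    (hd : |d| ≤ 2) (hpos : 0 < sin δ') (hsin : sin δ' ≤ sin δ) :
    Cfun d σ δ ≤ Cfun d σ' δ' := by
  have hpos' : 0 < sin δ := hpos.trans_le hsin
  have hcoeff : 0 ≤ 1 - d ^ 2 / 8 := by
    linarith [sq_le_sq.2 (hd.trans (le_abs_self 2))]
  have hcos : cos (arcsinSum d σ δ) ≤ cos (arcsinSum d σ' δ') :=
    calc cos (arcsinSum d σ δ) = (1 - d ^ 2 / 8) / sin δ - sin δ / 2 := by
          field_simp
          linarith [h.cos_arcsinSum_mul_sin hd]
      _ ≤ (1 - d ^ 2 / 8) / sin δ' - sin δ' / 2 := by gcongr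
      _ = cos (arcsinSum d σ' δ') := by
          field_simp
          linarith [h'.cos_arcsinSum_mul_sin hd]
  have hsum : arcsinSum d σ' δ' ≤ arcsinSum d σ δ :=
    (strictAntiOn_cos.le_iff_ge (arcsinSum_mem_Icc ..) (arcsinSum_mem_Icc ..)).1 hcos
  rw [h.Cfun_eq, h'.Cfun_eq]
  linarith

theorem exists_isBalanced_left {a b : ℝ} (hab : a ≤ b) (ha : Rfun d a δ ≤ Lfun d a δ)
    (hb : Lfun d b δ ≤ Rfun d b δ) : ∃ σ ∈ Icc a b, IsBalanced d σ δ :=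
  isPreconnected_Icc.intermediate_value₂ (right_mem_Icc.2 hab) (left_mem_Icc.2 hab)
    (by fun_prop) (by fun_prop) hb ha

theorem exists_isBalanced_right {a b : ℝ} (hab : a ≤ b) (ha : Lfun d σ a ≤ Rfun d σ a)
    (hb : Rfun d σ b ≤ Lfun d σ b) : ∃ δ ∈ Icc a b, IsBalanced d σ δ :=
  isPreconnected_Icc.intermediate_value₂ (left_mem_Icc.2 hab) (right_mem_Icc.2 hab)
    (by fun_prop) (by fun_prop) ha hb

/-! ### Maximization -/

theorem exists_isBalanced_Cfun_le (hd₀ : 0 ≤ d) (hd₂ : d ≤ 2) (hσ : σ ∈ Icc 0 π)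
    (hδ : δ ∈ deltaRange d) :
    ∃ σ' ∈ Icc 0 π, ∃ δ' ∈ deltaRange d, IsBalanced d σ' δ' ∧ Cfun d σ δ ≤ Cfun d σ' δ' := by
  wlog hRL : Rfun d σ δ ≤ Lfun d σ δ generalizing σ δ
  · rw [← Cfun_pi_sub_pi_sub]
    refine this ⟨sub_nonneg.2 hσ.2, sub_le_self _ hσ.1⟩ (pi_sub_mem_deltaRange hδ) ?_
    rw [Lfun_pi_sub_pi_sub, Rfun_pi_sub_pi_sub]
    exact (not_le.1 hRL).le
  have hmono := monotoneOn_Rfun_left hd₀ (sin_nonneg_of_mem_deltaRange hd₀ hδ)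
  have hπ : π ∈ Icc 0 π := right_mem_Icc.2 pi_pos.le
  rcases le_total (Lfun d π δ) (Rfun d π δ) with hLR_pi | hRL_pi
  · obtain ⟨x, hx, hbal⟩ := exists_isBalanced_left hσ.2 hRL hLR_pi
    have hx_mem : x ∈ Icc 0 π := ⟨hσ.1.trans hx.1, hx.2⟩
    refine ⟨x, hx_mem, δ, hδ, hbal, ?_⟩
    rw [hbal.Cfun_eq_Rfun]
    exact (min_le_right _ _).trans (hmono hσ hx_mem hx.1)
  · have hα := arcsin_mem_deltaRange d
    obtain ⟨y, hy, hbal⟩ := exists_isBalanced_right hδ.1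
      (Lfun_pi_le_Rfun_pi hd₀ (sin_nonneg_of_mem_deltaRange hd₀ hα) (arcsin_le_pi_div_two _))
      hRL_pi
    have hy_mem : y ∈ deltaRange d := ⟨hy.1, hy.2.trans hδ.2⟩
    refine ⟨π, hπ, y, hy_mem, hbal, ?_⟩
    calc Cfun d σ δ ≤ Rfun d σ δ := min_le_right _ _
      _ ≤ Rfun d π δ := hmono hσ hπ hσ.2
      _ ≤ Rfun d π y := antitoneOn_Rfun_pi hd₀ hd₂ hy_mem hδ hy.2
      _ = Cfun d π y := hbal.Cfun_eq_Rfun.symm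

theorem Cfun_eq_Afun_of_forall_isBalanced (hd₀ : 0 ≤ d) (hd₂ : d ≤ 2) (hσ : σ ∈ Icc 0 π)
    (hδ : δ ∈ deltaRange d)
    (hmax : ∀ σ' ∈ Icc 0 π, ∀ δ' ∈ deltaRange d, IsBalanced d σ' δ' →
      Cfun d σ' δ' ≤ Cfun d σ δ) :
    Cfun d σ δ = Afun d := by
  symm
  refine IsGreatest.csSup_eq ⟨⟨(σ, δ), ⟨hσ, hδ⟩, rfl⟩, ?_⟩
  rintro _ ⟨⟨x, y⟩, ⟨hx, hy⟩, rfl⟩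
  obtain ⟨σ', hσ', δ', hδ', hbal, hle⟩ := exists_isBalanced_Cfun_le hd₀ hd₂ hx hy
  exact hle.trans (hmax σ' hσ' δ' hδ' hbal)

theorem IsBalanced.Cfun_le_Cfun_pi (h : IsBalanced d σ δ) (h' : IsBalanced d π δ') (hd₀ : 0 < d)
    (hd₂ : d ≤ 2) (hσ : σ ∈ Icc 0 π) (hδ : δ ∈ deltaRange d) (hδ' : δ' ∈ deltaRange d)
    (hδ'_ge : π / 2 ≤ δ') : Cfun d σ δ ≤ Cfun d π δ' := by
  wlog hδ_ge : π / 2 ≤ δ generalizing σ δ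
  · rw [← Cfun_pi_sub_pi_sub]
    exact this h.pi_sub_pi_sub ⟨sub_nonneg.2 hσ.2, sub_le_self _ hσ.1⟩ (pi_sub_mem_deltaRange hδ)
      (by linarith)
  rcases le_total δ δ' with hle | hge
  · have hsin : sin δ' ≤ sin δ := by
      rw [← sin_pi_sub δ']
      exact sin_le_sin_of_mem_Icc_pi_sub
        (by linarith [hδ'.2, neg_pi_div_two_le_arcsin (d / 2)]) ⟨by linarith, by linarith⟩
    have hpos : 0 < sin δ' :=
      (half_pos hd₀).trans_le (half_le_sin_of_mem_deltaRange hd₀.le hd₂ hδ')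
    exact h.Cfun_le_Cfun_of_sin_le h' (abs_le.2 ⟨by linarith, hd₂⟩) hpos hsin
  · have hmono := monotoneOn_Rfun_left hd₀.le (sin_nonneg_of_mem_deltaRange hd₀.le hδ)
    calc Cfun d σ δ = Rfun d σ δ := h.Cfun_eq_Rfun
      _ ≤ Rfun d π δ := hmono hσ (right_mem_Icc.2 pi_pos.le) hσ.2
      _ ≤ Rfun d π δ' := antitoneOn_Rfun_pi hd₀.le hd₂ hδ' hδ hge
      _ = Cfun d π δ' := h'.Cfun_eq_Rfun.symm

theorem exists_isBalanced_pi (hd₀ : 0 ≤ d) (hd : d ≤ √2) :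
    ∃ δ ∈ Icc (π / 2) (π - arcsin (d / 2)), IsBalanced d π δ := by
  have hd₂ : d ≤ 2 := hd.trans sqrt_two_le_two
  have hα : arcsin (d / 2) ≤ π / 4 := arcsin_half_le_pi_div_four_iff.2 hd
  refine exists_isBalanced_right (by linarith [pi_pos])
    (Lfun_pi_le_Rfun_pi hd₀ (by simp) le_rfl) ?_
  rw [Lfun_pi_pi_sub_arcsin hd₀ hd₂, Rfun_pi_pi_sub_arcsin hd₀ hd₂]
  linarith

theorem exists_isBalanced_pi_sub_arcsin (hd : √2 ≤ d) (hd₂ : d ≤ 2) :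
    ∃ σ ∈ Icc 0 π, IsBalanced d σ (π - arcsin (d / 2)) := by
  have hd₀ : 0 ≤ d := (sqrt_nonneg 2).trans hd
  have hα : π / 4 ≤ arcsin (d / 2) := pi_div_four_le_arcsin_half_iff.2 hd
  refine exists_isBalanced_left pi_pos.le ?_ ?_
  · rw [← sub_self π, Lfun_pi_sub_pi_sub, Rfun_pi_sub_pi_sub]
    exact Lfun_pi_le_Rfun_pi hd₀ (sin_nonneg_of_mem_deltaRange hd₀ (arcsin_mem_deltaRange d))
      (arcsin_le_pi_div_two _)
  · rw [Lfun_pi_pi_sub_arcsin hd₀ hd₂, Rfun_pi_pi_sub_arcsin hd₀ hd₂]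
    linarith

/-- Let `α* = arcsin (d/2)` and `Ξ = [0, π] × [α*, π - α*]`.
If `0 < d ≤ √2`, the supremum of `C` over `Ξ` is attained at a point with
`σ = π`; if `√2 ≤ d < 2`, it is attained at a point with `δ = π - α*`. -/
theorem C_sup_on_boundary (d : ℝ) :
    (0 < d → d ≤ Real.sqrt 2 →
      ∃ δ₀ ∈ Set.Icc (Real.arcsin (d / 2)) (π - Real.arcsin (d / 2)),
        Cfun d π δ₀ = Afun d) ∧
    (Real.sqrt 2 ≤ d → d < 2 →
      ∃ σ₀ ∈ Set.Icc (0:ℝ) π,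
        Cfun d σ₀ (π - Real.arcsin (d / 2)) = Afun d) := by
  refine ⟨fun hd₀ hd => ?_, fun hd hd₂ => ?_⟩
  · have hd₂ : d ≤ 2 := hd.trans sqrt_two_le_two
    obtain ⟨δ₀, hδ₀, hbal₀⟩ := exists_isBalanced_pi hd₀.le hd
    have hδ₀_mem : δ₀ ∈ deltaRange d :=
      ⟨(arcsin_le_pi_div_two _).trans hδ₀.1, hδ₀.2⟩
    refine ⟨δ₀, hδ₀_mem, Cfun_eq_Afun_of_forall_isBalanced hd₀.le hd₂
      (right_mem_Icc.2 pi_pos.le) hδ₀_mem fun σ hσ δ hδ hbal => ?_⟩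
    exact hbal.Cfun_le_Cfun_pi hbal₀ hd₀ hd₂ hσ hδ hδ₀_mem hδ₀.1
  · have hd₀ : 0 < d := (sqrt_pos.2 two_pos).trans_le hd
    have hsin : sin (π - arcsin (d / 2)) = d / 2 := by
      rw [sin_pi_sub, sin_arcsin_half hd₀.le hd₂.le]
    obtain ⟨σ₀, hσ₀, hbal₀⟩ := exists_isBalanced_pi_sub_arcsin hd hd₂.le
    refine ⟨σ₀, hσ₀, Cfun_eq_Afun_of_forall_isBalanced hd₀.le hd₂.le hσ₀
      (pi_sub_mem_deltaRange (arcsin_mem_deltaRange d)) fun σ _ δ hδ hbal => ?_⟩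
    exact hbal.Cfun_le_Cfun_of_sin_le hbal₀ (abs_le.2 ⟨by linarith, hd₂.le⟩)
      ((half_pos hd₀).trans_eq hsin.symm)
      (hsin.trans_le (half_le_sin_of_mem_deltaRange hd₀.le hd₂.le hδ))
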